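/- arXiv:2105.07503 — 8 statements merged into one kernel-verified Lean document; each statement's English description precedes it below -/
import Mathlib

section
/- Let γ, γ' : Fin 4 → Matrix (Fin 4) (Fin 4) ℂ be two families of 4×4 complex matrices both satisfying the Clifford anticommutation relations: γ μ * γ ν + γ ν * γ μ = (2 * g μ ν) • 1 and γ' μ * γ' ν + γ' ν * γ' μ = (2 * g μ ν) • 1 for all μ, ν ∈ Fin 4. Then there exists an invertible 4×4 complex matrix S such that γ' μ = S * γ μ * S⁻¹ for all μ; moreover this S is unique up to a multiplicative constant: if S and S' are both invertible and satisfy γ' μ = S * γ μ * S⁻¹ = S' * γ μ * S'⁻¹ for all μ, then S' = c • S for some nonzero c ∈ ℂ. -/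
/-- The Minkowski metric with signature (+,−,−,−) on four indices. -/
def minkowskiMetric : Fin 4 → Fin 4 → ℂ := fun μ ν =>
  if μ = ν then (if μ = 0 then 1 else -1) else 0

/-!
Let `γ` and `γ'` be Clifford families of even size `n` in an algebra of dimension `2 ^ n`. The maps
`F ↦ γ' i * F * (γ i)⁻¹` are involutions, and they commute because exchanging two of them costs a
sign on each side. Their common eigenspaces, indexed by the `2 ^ n` sign vectors, are independent
and at least one of them is nonzero. Since `n` is even, every sign vector is implemented by a unit
`U` (a product of the `γ' i`) with `γ' i * U = ± U * γ' i`, so left multiplication by units moves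
any common eigenspace into any other. Hence all of them are nonzero, and by counting dimensions all
of them are lines. The line for the trivial sign vector consists of the intertwiners of `γ` and
`γ'`; if `S` spans it, the products `U * S` span the whole algebra, so `S` is invertible.
-/

open Module

section CommutingInvolutions

variable {ι R K M : Type*} [AddCommGroup M]

theorem exists_common_eigenvector_of_commuting_involutions [Finite ι] [Ring R] [Module R M]
    [Nontrivial M] (T : ι → End R M) (hcomm : ∀ i j, Commute (T i) (T j))
    (hsq : ∀ i, T i * T i = 1) :
    ∃ (ε : ι → ℤˣ) (x : M), x ≠ 0 ∧ ∀ i, T i x = ε i • x := by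
  classical
  cases nonempty_fintype ι
  suffices ∀ s : Finset ι, ∃ (ε : ι → ℤˣ) (x : M), x ≠ 0 ∧ ∀ i ∈ s, T i x = ε i • x by
    simpa using this Finset.univ
  intro s
  induction s using Finset.induction_on with
  | empty => simpa using exists_ne (0 : M)
  | insert j s hj ih =>
    obtain ⟨ε, x, hx, hε⟩ := ih
    have update_ne (δ : ℤˣ) {i : ι} (hi : i ∈ s) : Function.update ε j δ i = ε i :=
      Function.update_of_ne (ne_of_mem_of_not_mem hi hj) _ _
    by_cases hsum : x + T j x = 0
    · refine ⟨Function.update ε j (-1), x, hx, Finset.forall_mem_insert .. |>.2 ⟨?_, ?_⟩⟩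
      · simpa [Units.smul_def] using eq_neg_of_add_eq_zero_right hsum
      · exact fun i hi ↦ by rw [update_ne _ hi, hε i hi]
    · refine ⟨Function.update ε j 1, x + T j x, hsum, Finset.forall_mem_insert .. |>.2 ⟨?_, ?_⟩⟩
      · have hTT : T j (T j x) = x := LinearMap.congr_fun (hsq j) x
        simp [hTT, add_comm]
      · intro i hi
        have hTT : T i (T j x) = T j (T i x) := LinearMap.congr_fun (hcomm i j) x
        simp only [update_ne _ hi, map_add, hTT, hε i hi, Units.smul_def, map_zsmul, smul_add]

theorem iSupIndep_iInf_eigenspace_sign [Field K] [NeZero (2 : K)] [Module K M]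
    (T : ι → End K M) (hcomm : ∀ i j, Commute (T i) (T j)) :
    iSupIndep fun ε : ι → ℤˣ ↦ ⨅ i, (T i).eigenspace ((ε i : ℤ) : K) := by
  have sign_injective : Function.Injective fun u : ℤˣ ↦ ((u : ℤ) : K) := by
    intro u v huv
    have neg_one_ne_one : (-1 : K) ≠ 1 := by
      rw [Ne, neg_eq_iff_add_eq_zero, one_add_one_eq_two]
      exact two_ne_zero
    rcases Int.units_eq_one_or u with rfl | rfl <;> rcases Int.units_eq_one_or v with rfl | rfl <;>
      simp_all [eq_comm]
  have independent := End.independent_iInf_maxGenEigenspace_of_forall_mapsTo T fun i j ↦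
    End.mapsTo_maxGenEigenspace_of_comm (hcomm j i)
  exact (independent.comp sign_injective.comp_left).mono fun ε ↦ iInf_mono fun i ↦
    (T i).genEigenspace _ |>.mono le_top

end CommutingInvolutions

section IndependentSubmodules

variable {κ K V : Type*} [Fintype κ] [Field K] [AddCommGroup V] [Module K V]
  [FiniteDimensional K V] {p : κ → Submodule K V}

theorem span_range_eq_top_of_iSupIndep (hp : iSupIndep p) (hcard : Fintype.card κ = finrank K V)
    {x : κ → V} (hxp : ∀ k, x k ∈ p k) (hx : ∀ k, x k ≠ 0) :
    Submodule.span K (Set.range x) = ⊤ :=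
  (hp.linearIndependent p hxp hx).span_eq_top_of_card_eq_finrank' hcard

theorem finrank_eq_one_of_iSupIndep (hp : iSupIndep p) (hcard : Fintype.card κ = finrank K V)
    (hbot : ∀ k, p k ≠ ⊥) (k : κ) : finrank K (p k) = 1 := by
  choose x hxp hx using fun k ↦ (p k).ne_bot_iff.1 (hbot k)
  have lines_le : (fun k ↦ K ∙ x k) ≤ p := fun k ↦ by simpa using hxp k
  have iSup_lines : ⨆ k, K ∙ x k = ⊤ := by
    rw [← Submodule.span_range_eq_iSup, span_range_eq_top_of_iSupIndep hp hcard hxp hx]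
  rw [← (hp.le_iff_eq_of_iSup_eq_top iSup_lines).1 lines_le]
  exact finrank_span_singleton (hx k)

end IndependentSubmodules

/-- `γ` is a Clifford family with squares `q`, i.e. it satisfies the defining relations of the
Clifford algebra of the diagonal quadratic form with coefficients `q`. -/
structure IsCliffordFamily {ι K A : Type*} [CommSemiring K] [Ring A] [Algebra K A]
    (q : ι → K) (γ : ι → A) : Prop where
  mul_self (i : ι) : γ i * γ i = algebraMap K A (q i)
  anticomm {i j : ι} (hij : i ≠ j) : γ i * γ j = -(γ j * γ i)

section SignedIntertwiners

variable {ι K A : Type*} [CommSemiring K] [Ring A] [Algebra K A]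

variable (K) in
/-- The elements that intertwine the families `γ` and `γ'` up to the sign vector `ε`; for `ε = 1`
these are the intertwiners proper. -/
def signedIntertwiners (γ γ' : ι → A) (ε : ι → ℤˣ) : Submodule K A where
  carrier := {F | ∀ i, γ' i * F = ε i • (F * γ i)}
  zero_mem' := by simp
  add_mem' hF hG i := by rw [mul_add, hF i, hG i, add_mul, smul_add]
  smul_mem' c F hF i := by rw [mul_smul_comm, hF i, smul_mul_assoc, smul_comm]

theorem mem_signedIntertwiners {γ γ' : ι → A} {ε : ι → ℤˣ} {F : A} :
    F ∈ signedIntertwiners K γ γ' ε ↔ ∀ i, γ' i * F = ε i • (F * γ i) :=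
  Iff.rfl

theorem mul_mem_signedIntertwiners {γ γ' γ'' : ι → A} {ε δ : ι → ℤˣ} {F G : A}
    (hG : G ∈ signedIntertwiners K γ' γ'' δ) (hF : F ∈ signedIntertwiners K γ γ' ε) :
    G * F ∈ signedIntertwiners K γ γ'' (δ * ε) := fun i ↦ by
  rw [← mul_assoc, hG i, smul_mul_assoc, mul_assoc, hF i, mul_smul_comm, ← mul_assoc, smul_smul,
    Pi.mul_apply]

theorem units_mem_signedIntertwiners_one_iff {γ γ' : ι → A} {S : Aˣ} :
    (S : A) ∈ signedIntertwiners K γ γ' 1 ↔ ∀ i, γ' i = S * γ i * ↑S⁻¹ := by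
  simp [mem_signedIntertwiners, Units.eq_mul_inv_iff_mul_eq]

variable (K) in
/-- The sign vectors `ε` implemented by a unit `U` through `γ i * U = ε i • (U * γ i)`. -/
def implementedSigns (γ : ι → A) : Submonoid (ι → ℤˣ) where
  carrier := {ε | ∃ U : Aˣ, (U : A) ∈ signedIntertwiners K γ γ ε}
  one_mem' := ⟨1, by simp [mem_signedIntertwiners]⟩
  mul_mem' := fun ⟨U, hU⟩ ⟨V, hV⟩ ↦ ⟨U * V, mul_mem_signedIntertwiners hU hV⟩

end SignedIntertwiners

/-- The map `F ↦ γ' i * F * (γ i)⁻¹`, written with `(q i)⁻¹ • γ i` in place of the inverse of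
`γ i`, which it is when `γ` is a Clifford family with nonzero squares `q`. -/
def twistedConj {ι K A : Type*} [Field K] [Ring A] [Algebra K A] (q : ι → K) (γ γ' : ι → A)
    (i : ι) : End K A :=
  (q i)⁻¹ • LinearMap.mulLeftRight K (γ' i, γ i)

namespace IsCliffordFamily

variable {ι K A : Type*} [Field K] [Ring A] [Algebra K A] {q : ι → K} {γ γ' : ι → A}

theorem of_anticommutator [NeZero (2 : K)] {g : ι → ι → K}
    (hg : Pairwise fun i j ↦ g i j = 0)
    (h : ∀ i j, γ i * γ j + γ j * γ i = (2 * g i j) • (1 : A)) :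
    IsCliffordFamily (fun i ↦ g i i) γ where
  mul_self i := by
    have two_smul_eq : (2 : K) • (γ i * γ i) = (2 : K) • algebraMap K A (g i i) := by
      rw [two_smul, h, mul_smul, Algebra.algebraMap_eq_smul_one]
    exact (IsUnit.mk0 (2 : K) two_ne_zero).smul_left_cancel.1 two_smul_eq
  anticomm {i j} hij := eq_neg_of_add_eq_zero_left <| by rw [h, hg hij, mul_zero, zero_smul]

theorem isUnit (hγ : IsCliffordFamily q γ) {i : ι} (hi : q i ≠ 0) : IsUnit (γ i) := by
  have isUnit_sq : IsUnit (γ i * γ i) := by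
    rw [hγ.mul_self]
    exact (IsUnit.mk0 _ hi).map (algebraMap K A)
  exact ((Commute.refl (γ i)).isUnit_mul_iff.1 isUnit_sq).1

theorem neg_mulSingle_mem_implementedSigns [DecidableEq ι] (hγ : IsCliffordFamily q γ) {j : ι}
    (hj : q j ≠ 0) : -Pi.mulSingle j (-1) ∈ implementedSigns K γ := by
  refine ⟨(hγ.isUnit hj).unit, fun i ↦ ?_⟩
  rcases eq_or_ne i j with rfl | hij
  · simp
  · simp [hij, hγ.anticomm hij, Units.smul_def]

theorem implementedSigns_eq_top [Fintype ι] (hγ : IsCliffordFamily q γ) (hq : ∀ i, q i ≠ 0)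
    (hι : Even (Fintype.card ι)) : implementedSigns K γ = ⊤ := by
  classical
  have neg_one_mem : (-1 : ι → ℤˣ) ∈ implementedSigns K γ := by
    have prod_eq : ∏ j, -Pi.mulSingle j (-1) = (-1 : ι → ℤˣ) := by
      rw [Finset.prod_neg, Finset.card_univ, hι.neg_one_pow, one_mul]
      exact Finset.univ_prod_mulSingle (-1)
    exact prod_eq ▸ prod_mem fun j _ ↦ hγ.neg_mulSingle_mem_implementedSigns (hq j)
  refine eq_top_iff.2 fun ε _ ↦ Submonoid.pi_mem_of_mulSingle_mem ε fun j ↦ ?_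
  rcases Int.units_eq_one_or (ε j) with hε | hε
  · simp [hε, one_mem]
  · simpa [hε] using mul_mem neg_one_mem (hγ.neg_mulSingle_mem_implementedSigns (hq j))

theorem twistedConj_mul_self (hγ : IsCliffordFamily q γ) (hγ' : IsCliffordFamily q γ') {i : ι}
    (hi : q i ≠ 0) : twistedConj q γ γ' i * twistedConj q γ γ' i = 1 := by
  ext F
  have sandwich : γ' i * (γ' i * F * γ i) * γ i = (q i * q i) • F := by
    rw [show γ' i * (γ' i * F * γ i) * γ i = γ' i * γ' i * F * (γ i * γ i) by noncomm_ring,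
      hγ'.mul_self, hγ.mul_self, ← Algebra.commutes, ← mul_assoc, ← map_mul, Algebra.smul_def]
  simp [twistedConj, sandwich, smul_smul, mul_mul_mul_comm, hi]

theorem commute_twistedConj (hγ : IsCliffordFamily q γ) (hγ' : IsCliffordFamily q γ') (i j : ι) :
    Commute (twistedConj q γ γ' i) (twistedConj q γ γ' j) := by
  rcases eq_or_ne i j with rfl | hij
  · exact Commute.refl _
  refine (Commute.smul_left ?_ _).smul_right _
  ext F
  calc γ' i * (γ' j * F * γ j) * γ i = γ' i * γ' j * F * (γ j * γ i) := by noncomm_ring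
    _ = γ' j * γ' i * F * (γ i * γ j) := by
      rw [hγ'.anticomm hij, hγ.anticomm hij.symm, neg_mul, neg_mul_neg]
    _ = γ' j * (γ' i * F * γ i) * γ j := by noncomm_ring

theorem twistedConj_apply_mul (hγ : IsCliffordFamily q γ) {i : ι} (hi : q i ≠ 0) (F : A) :
    twistedConj q γ γ' i F * γ i = γ' i * F := by
  calc (q i)⁻¹ • (γ' i * F * γ i) * γ i = (q i)⁻¹ • (γ' i * F * (γ i * γ i)) := by
        rw [smul_mul_assoc, mul_assoc]
    _ = γ' i * F := by
        rw [hγ.mul_self, ← Algebra.commutes, ← Algebra.smul_def, inv_smul_smul₀ hi]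

theorem twistedConj_apply_eq_iff (hγ : IsCliffordFamily q γ) {i : ι} (hi : q i ≠ 0)
    {u : ℤˣ} {F : A} : twistedConj q γ γ' i F = u • F ↔ γ' i * F = u • (F * γ i) := by
  rw [← (hγ.isUnit hi).mul_left_inj, hγ.twistedConj_apply_mul hi, smul_mul_assoc]

theorem signedIntertwiners_eq_iInf_eigenspace (hγ : IsCliffordFamily q γ) (hq : ∀ i, q i ≠ 0)
    (ε : ι → ℤˣ) : signedIntertwiners K γ γ' ε =
      ⨅ i, (twistedConj q γ γ' i).eigenspace ((ε i : ℤ) : K) := by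
  ext F
  simp only [mem_signedIntertwiners, Submodule.mem_iInf, End.mem_eigenspace_iff,
    Int.cast_smul_eq_zsmul, ← Units.smul_def]
  exact forall_congr' fun i ↦ (hγ.twistedConj_apply_eq_iff (hq i)).symm

theorem iSupIndep_signedIntertwiners [NeZero (2 : K)] (hγ : IsCliffordFamily q γ)
    (hγ' : IsCliffordFamily q γ') (hq : ∀ i, q i ≠ 0) :
    iSupIndep (signedIntertwiners K γ γ') := by
  simpa only [← hγ.signedIntertwiners_eq_iInf_eigenspace hq] using
    iSupIndep_iInf_eigenspace_sign (twistedConj q γ γ') (hγ.commute_twistedConj hγ')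

section EvenSize

variable [Fintype ι]

theorem exists_unit_mem_signedIntertwiners (hγ : IsCliffordFamily q γ) (hq : ∀ i, q i ≠ 0)
    (hι : Even (Fintype.card ι)) (ε : ι → ℤˣ) :
    ∃ U : Aˣ, (U : A) ∈ signedIntertwiners K γ γ ε :=
  (hγ.implementedSigns_eq_top hq hι).ge (Submonoid.mem_top ε)

theorem signedIntertwiners_ne_bot [Nontrivial A] (hγ : IsCliffordFamily q γ)
    (hγ' : IsCliffordFamily q γ') (hq : ∀ i, q i ≠ 0) (hι : Even (Fintype.card ι))
    (ε : ι → ℤˣ) : signedIntertwiners K γ γ' ε ≠ ⊥ := by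
  obtain ⟨δ, F, hF, hδ⟩ := exists_common_eigenvector_of_commuting_involutions
    (twistedConj q γ γ') (hγ.commute_twistedConj hγ') fun i ↦ hγ.twistedConj_mul_self hγ' (hq i)
  have hFδ : F ∈ signedIntertwiners K γ γ' δ := fun i ↦
    (hγ.twistedConj_apply_eq_iff (hq i)).1 (hδ i)
  obtain ⟨U, hU⟩ := hγ'.exists_unit_mem_signedIntertwiners hq hι (ε * δ⁻¹)
  refine (Submodule.ne_bot_iff _).2 ⟨U * F, ?_, by simpa using hF⟩
  simpa using mul_mem_signedIntertwiners hU hFδ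

variable [NeZero (2 : K)]

theorem finrank_signedIntertwiners (hγ : IsCliffordFamily q γ) (hγ' : IsCliffordFamily q γ')
    (hq : ∀ i, q i ≠ 0) (hι : Even (Fintype.card ι)) (hA : finrank K A = 2 ^ Fintype.card ι)
    (ε : ι → ℤˣ) : finrank K (signedIntertwiners K γ γ' ε) = 1 := by
  classical
  have finrank_pos : 0 < finrank K A := by rw [hA]; positivity
  have := Module.nontrivial_of_finrank_pos finrank_pos
  have := Module.finite_of_finrank_pos finrank_pos
  exact finrank_eq_one_of_iSupIndep (hγ.iSupIndep_signedIntertwiners hγ' hq) (by simp [hA])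
    (hγ.signedIntertwiners_ne_bot hγ' hq hι) ε

theorem isUnit_of_mem_signedIntertwiners_one (hγ : IsCliffordFamily q γ)
    (hγ' : IsCliffordFamily q γ') (hq : ∀ i, q i ≠ 0) (hι : Even (Fintype.card ι))
    (hA : finrank K A = 2 ^ Fintype.card ι) {S : A} (hS : S ∈ signedIntertwiners K γ γ' 1)
    (hS0 : S ≠ 0) : IsUnit S := by
  classical
  have := Module.finite_of_finrank_pos (by rw [hA]; positivity : 0 < finrank K A)
  choose U hU using hγ'.exists_unit_mem_signedIntertwiners hq hι
  have span_eq_top : Submodule.span K (Set.range fun ε ↦ (U ε : A) * S) = ⊤ :=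
    span_range_eq_top_of_iSupIndep (hγ.iSupIndep_signedIntertwiners hγ' hq) (by simp [hA])
      (fun ε ↦ by simpa using mul_mem_signedIntertwiners (hU ε) hS) (by simpa using hS0)
  have span_le : Submodule.span K (Set.range fun ε ↦ (U ε : A) * S) ≤
      LinearMap.range (LinearMap.mulRight K S) :=
    Submodule.span_le.2 <| Set.range_subset_iff.2 fun ε ↦ ⟨U ε, rfl⟩
  obtain ⟨L, hL⟩ := span_le (span_eq_top ▸ Submodule.mem_top : (1 : A) ∈ _)
  have := IsArtinianRing.of_finite K A
  exact IsUnit.of_mul_eq_one_right L hL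

end EvenSize

end IsCliffordFamily

theorem pauli_fundamental_theorem_general {ι K A : Type*} [Fintype ι] [Field K] [NeZero (2 : K)]
    [Ring A] [Algebra K A] {q : ι → K} {γ γ' : ι → A} (hγ : IsCliffordFamily q γ)
    (hγ' : IsCliffordFamily q γ') (hq : ∀ i, q i ≠ 0) (hι : Even (Fintype.card ι))
    (hA : finrank K A = 2 ^ Fintype.card ι) :
    (∃ S : Aˣ, ∀ i, γ' i = S * γ i * ↑S⁻¹) ∧
    ∀ S S' : Aˣ, (∀ i, γ' i = S * γ i * ↑S⁻¹) → (∀ i, γ' i = S' * γ i * ↑S'⁻¹) →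
      ∃ c : K, c ≠ 0 ∧ (S' : A) = c • (S : A) := by
  have := Module.nontrivial_of_finrank_pos (by rw [hA]; positivity : 0 < finrank K A)
  have finrank_eq_one := hγ.finrank_signedIntertwiners hγ' hq hι hA 1
  simp only [← units_mem_signedIntertwiners_one_iff (K := K)]
  constructor
  · obtain ⟨S, hS, hS0⟩ :=
      (Submodule.ne_bot_iff _).1 (hγ.signedIntertwiners_ne_bot hγ' hq hι 1)
    exact ⟨(hγ.isUnit_of_mem_signedIntertwiners_one hγ' hq hι hA hS hS0).unit, hS⟩
  · intro S S' hS hS'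
    obtain ⟨c, hc⟩ := (finrank_eq_one_iff_of_nonzero' (⟨S, hS⟩ : signedIntertwiners K γ γ' 1)
      (by simp)).1 finrank_eq_one ⟨S', hS'⟩
    have hcS : (S' : A) = c • (S : A) := (congrArg Subtype.val hc).symm
    refine ⟨c, ?_, hcS⟩
    rintro rfl
    exact S'.ne_zero (by rw [hcS, zero_smul])

theorem minkowskiMetric_pairwise_eq_zero : Pairwise fun μ ν ↦ minkowskiMetric μ ν = 0 :=
  fun _ _ h ↦ if_neg h

theorem minkowskiMetric_self_ne_zero (μ : Fin 4) : minkowskiMetric μ μ ≠ 0 := by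
  by_cases h : μ = 0 <;> simp [minkowskiMetric, h]

/-- **Pauli's Fundamental Theorem.** Any two families of 4×4 complex matrices satisfying
the Clifford anticommutation relations are related by a similarity transformation,
which is unique up to a nonzero multiplicative constant. -/
theorem pauli_fundamental_theorem
    (γ γ' : Fin 4 → Matrix (Fin 4) (Fin 4) ℂ)
    (hγ : ∀ μ ν : Fin 4,
      γ μ * γ ν + γ ν * γ μ = (2 * minkowskiMetric μ ν) • (1 : Matrix (Fin 4) (Fin 4) ℂ))
    (hγ' : ∀ μ ν : Fin 4,
      γ' μ * γ' ν + γ' ν * γ' μ = (2 * minkowskiMetric μ ν) • (1 : Matrix (Fin 4) (Fin 4) ℂ)) :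
    (∃ S : Matrix (Fin 4) (Fin 4) ℂ, IsUnit S ∧ ∀ μ : Fin 4, γ' μ = S * γ μ * S⁻¹) ∧
    (∀ S S' : Matrix (Fin 4) (Fin 4) ℂ, IsUnit S → IsUnit S' →
      (∀ μ : Fin 4, γ' μ = S * γ μ * S⁻¹) → (∀ μ : Fin 4, γ' μ = S' * γ μ * S'⁻¹) →
      ∃ c : ℂ, c ≠ 0 ∧ S' = c • S) := by
  obtain ⟨⟨S, hS⟩, unique⟩ := pauli_fundamental_theorem_general
    (IsCliffordFamily.of_anticommutator minkowskiMetric_pairwise_eq_zero hγ)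
    (IsCliffordFamily.of_anticommutator minkowskiMetric_pairwise_eq_zero hγ')
    minkowskiMetric_self_ne_zero (by decide) (by simp [finrank_matrix])
  simp only [Matrix.coe_units_inv] at hS unique
  refine ⟨⟨S, S.isUnit, hS⟩, ?_⟩
  rintro _ _ ⟨S, rfl⟩ ⟨S', rfl⟩
  exact unique S S'
end

section
/- Let E be a complex Hilbert space and H : ℝ → (E →L[ℂ] E) a strongly continuous map such that H t is self-adjoint for every t. Then there exists an evolution family U : ℝ → ℝ → (E →L[ℂ] E) such that (i) U t t = 1 for all t; (ii) U r s ∘ U s t = U r t for all r, s, t ∈ ℝ; and (iii) for every s ∈ ℝ and every ψ ∈ E, the map t ↦ U t s ψ is differentiable with derivative (−Complex.I) • (H t) ((U t s) ψ) at every t ∈ ℝ. -/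
/-!
The solution of `x' = A t x`, `x s = ψ` is the Dyson series `∑ₙ xₙ` with `x₀ = ψ` and
`xₙ₊₁ t = ∫ τ in s..t, A τ (xₙ τ)`. By the uniform boundedness principle a strongly continuous `A`
is norm bounded by some `M` on each compact interval. Hence the integrands are continuous, and
`‖xₙ t‖ ≤ ‖ψ‖ (M |t - s|)ⁿ / n!`, so that the series converges and may be differentiated term by
term. The same bound makes the equation Lipschitz, so its solutions are unique; linearity in `ψ` and
the composition law compare two solutions agreeing at one time. The Schrödinger equation is the
case `A t = -i H t`.
-/

open Filter MeasureTheory Metric Set Topology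
open scoped NNReal Nat

section StrongContinuity

variable {X 𝕜 E F : Type*} [TopologicalSpace X] [NontriviallyNormedField 𝕜]
  [SeminormedAddCommGroup E] [NormedSpace 𝕜 E] [CompleteSpace E]
  [SeminormedAddCommGroup F] [NormedSpace 𝕜 F] {A : X → E →L[𝕜] F}

theorem exists_opNorm_le_on_isCompact {K : Set X} (hK : IsCompact K)
    (hA : ∀ v, ContinuousOn (fun t => A t v) K) : ∃ M : ℝ≥0, ∀ t ∈ K, ‖A t‖ ≤ M := by
  have pointwise_bounded (v : E) : ∃ C, ∀ t : K, ‖A t v‖ ≤ C :=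
    (hK.exists_bound_of_continuousOn (hA v)).imp fun _ hC t => hC t t.2
  obtain ⟨C, hC⟩ := banach_steinhaus pointwise_bounded
  exact ⟨C.toNNReal, fun t ht => (hC ⟨t, ht⟩).trans C.le_coe_toNNReal⟩

theorem continuous_apply_of_strongly_continuous [WeaklyLocallyCompactSpace X]
    (hA : ∀ v, Continuous fun t => A t v) {x : X → E} (hx : Continuous x) :
    Continuous fun t => A t (x t) := by
  refine continuous_iff_continuousAt.2 fun t => ?_
  obtain ⟨K, hK, hKt⟩ := exists_compact_mem_nhds t
  obtain ⟨M, hM⟩ := exists_opNorm_le_on_isCompact hK fun v => (hA v).continuousOn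
  have bound_tendsto : Tendsto (fun τ => M * ‖x τ - x t‖) (𝓝 t) (𝓝 0) := by
    have : Continuous fun τ => M * ‖x τ - x t‖ := by fun_prop
    simpa using this.tendsto t
  have increment_tendsto : Tendsto (fun τ => A τ (x τ - x t)) (𝓝 t) (𝓝 0) :=
    squeeze_zero_norm' (mem_of_superset hKt fun τ hτ => (A τ).le_of_opNorm_le (hM τ hτ) _)
      bound_tendsto
  simpa [ContinuousAt] using increment_tendsto.add ((hA (x t)).tendsto t)

end StrongContinuity

theorem norm_intervalIntegral_le_of_norm_le_mul_abs_sub_pow {E : Type*} [NormedAddCommGroup E]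
    [NormedSpace ℝ E] {f : ℝ → E} {s t C : ℝ} {n : ℕ}
    (hf : ∀ τ ∈ uIoc s t, ‖f τ‖ ≤ C * |τ - s| ^ n) :
    ‖∫ τ in s..t, f τ‖ ≤ C * (|t - s| ^ (n + 1) / (n + 1)) := by
  have majorant_continuous : Continuous fun τ : ℝ => C * |τ - s| ^ n := by fun_prop
  calc ‖∫ τ in s..t, f τ‖ = ‖∫ τ in uIoc s t, f τ‖ :=
        intervalIntegral.norm_integral_eq_norm_integral_uIoc f
    _ ≤ ∫ τ in uIoc s t, C * |τ - s| ^ n :=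
        norm_integral_le_of_norm_le majorant_continuous.integrableOn_uIoc
          ((ae_restrict_iff' measurableSet_uIoc).2 (.of_forall hf))
    _ = C * (|t - s| ^ (n + 1) / (n + 1)) := by
        rw [integral_const_mul, integral_pow_abs_sub_uIoc]

section Dyson

variable {𝕜 E : Type*} [NontriviallyNormedField 𝕜] [NormedAddCommGroup E]
  [NormedSpace 𝕜 E] [NormedSpace ℝ E] {A : ℝ → E →L[𝕜] E} {s t : ℝ} {ψ : E}

/-- The `n`-th term of the Dyson series: the `n`-fold iterated integral obtained by applying Picard
iteration for `x' = A t x` to the constant function `ψ`, with base time `s`. -/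
noncomputable def dysonTerm (A : ℝ → E →L[𝕜] E) (s : ℝ) (ψ : E) : ℕ → ℝ → E
  | 0 => fun _ => ψ
  | n + 1 => fun t => ∫ τ in s..t, A τ (dysonTerm A s ψ n τ)

/-- The Dyson series, which for strongly continuous `A` on a Banach space is the value at time `t`
of the solution of `x' = A t x` with `x s = ψ`. It is `0` where the series does not converge. -/
noncomputable def dysonSeries (A : ℝ → E →L[𝕜] E) (s : ℝ) (ψ : E) (t : ℝ) : E :=
  ∑' n, dysonTerm A s ψ n t

theorem dysonSeries_self : dysonSeries A s ψ s = ψ := by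
  have higher_terms (n : ℕ) (hn : n ≠ 0) : dysonTerm A s ψ n s = 0 := by
    obtain ⟨m, rfl⟩ := Nat.exists_eq_succ_of_ne_zero hn
    exact intervalIntegral.integral_same
  exact tsum_eq_single 0 higher_terms

theorem norm_dysonTerm_le {M : ℝ≥0} (hM : ∀ τ ∈ uIcc s t, ‖A τ‖ ≤ M) (n : ℕ) :
    ‖dysonTerm A s ψ n t‖ ≤ ‖ψ‖ * ((M * |t - s|) ^ n / n !) := by
  induction n generalizing t with
  | zero => simp [dysonTerm]
  | succ n ih =>
    have integrand_le (τ : ℝ) (hτ : τ ∈ uIoc s t) :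
        ‖A τ (dysonTerm A s ψ n τ)‖ ≤ ‖ψ‖ * M ^ (n + 1) / n ! * |τ - s| ^ n := by
      have hτ' : τ ∈ uIcc s t := uIoc_subset_uIcc hτ
      calc ‖A τ (dysonTerm A s ψ n τ)‖ ≤ M * ‖dysonTerm A s ψ n τ‖ :=
            (A τ).le_of_opNorm_le (hM τ hτ') _
        _ ≤ M * (‖ψ‖ * ((M * |τ - s|) ^ n / n !)) := by
            gcongr
            exact ih fun σ hσ => hM σ (uIcc_subset_uIcc_left hτ' hσ)
        _ = ‖ψ‖ * M ^ (n + 1) / n ! * |τ - s| ^ n := by ring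
    calc ‖dysonTerm A s ψ (n + 1) t‖
        ≤ ‖ψ‖ * M ^ (n + 1) / n ! * (|t - s| ^ (n + 1) / (n + 1)) :=
          norm_intervalIntegral_le_of_norm_le_mul_abs_sub_pow integrand_le
      _ = ‖ψ‖ * ((M * |t - s|) ^ (n + 1) / (n + 1)!) := by
          rw [Nat.factorial_succ, mul_pow]
          push_cast
          field_simp

theorem norm_dysonSeries_le {M : ℝ≥0} (hM : ∀ τ ∈ uIcc s t, ‖A τ‖ ≤ M) (ψ : E) :
    ‖dysonSeries A s ψ t‖ ≤ Real.exp (M * |t - s|) * ‖ψ‖ := by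
  have majorant_hasSum : HasSum (fun n : ℕ => ‖ψ‖ * ((M * |t - s|) ^ n / n !))
      (‖ψ‖ * Real.exp (M * |t - s|)) := by
    rw [Real.exp_eq_exp_ℝ]
    exact (NormedSpace.expSeries_div_hasSum_exp (M * |t - s|)).mul_left ‖ψ‖
  rw [mul_comm]
  exact tsum_of_norm_bounded majorant_hasSum (norm_dysonTerm_le hM)

theorem norm_apply_dysonTerm_le_of_mem_ball {M : ℝ≥0} {R : ℝ}
    (hM : ∀ τ ∈ closedBall s R, ‖A τ‖ ≤ M) (ht : t ∈ ball s R) (n : ℕ) :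
    ‖A t (dysonTerm A s ψ n t)‖ ≤ M * (‖ψ‖ * ((M * R) ^ n / n !)) := by
  have ht' : t ∈ closedBall s R := ball_subset_closedBall ht
  have hs : s ∈ closedBall s R := mem_closedBall_self (dist_nonneg.trans ht')
  have uIcc_subset : uIcc s t ⊆ closedBall s R :=
    (convex_closedBall s R).ordConnected.uIcc_subset hs ht'
  calc ‖A t (dysonTerm A s ψ n t)‖ ≤ M * ‖dysonTerm A s ψ n t‖ :=
        (A t).le_of_opNorm_le (hM t ht') _
    _ ≤ M * (‖ψ‖ * ((M * |t - s|) ^ n / n !)) := by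
        gcongr
        exact norm_dysonTerm_le (fun τ hτ => hM τ (uIcc_subset hτ)) n
    _ ≤ M * (‖ψ‖ * ((M * R) ^ n / n !)) := by
        gcongr
        exact ht'

theorem isIntegralCurve_eq_of_eq_at [CompleteSpace E] (hA : ∀ v, Continuous fun t => A t v)
    {x y : ℝ → E} (hx : IsIntegralCurve x fun t => A t) (hy : IsIntegralCurve y fun t => A t)
    (hxy : x s = y s) : x = y := by
  ext t
  have hs : s ∈ ball s (|t - s| + 1) := mem_ball_self (by positivity)
  have ht : t ∈ ball s (|t - s| + 1) := by simp [Real.dist_eq]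
  obtain ⟨M, hM⟩ := exists_opNorm_le_on_isCompact (isCompact_closedBall s (|t - s| + 1))
    fun v => (hA v).continuousOn
  rw [Real.ball_eq_Ioo] at hs ht
  refine ODE_solution_unique_of_mem_Ioo (v := fun τ => A τ) (s := fun _ => univ) (K := M)
    (fun τ hτ => ?_) hs (fun τ _ => ⟨hx τ, mem_univ _⟩) (fun τ _ => ⟨hy τ, mem_univ _⟩) hxy ht
  rw [← Real.ball_eq_Ioo] at hτ
  exact ((A τ).lipschitz.weaken (hM τ (ball_subset_closedBall hτ))).lipschitzOnWith

variable [CompleteSpace E] (hA : ∀ v, Continuous fun t => A t v)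
include hA

theorem continuous_dysonTerm (n : ℕ) : Continuous (dysonTerm A s ψ n) := by
  induction n with
  | zero => exact continuous_const
  | succ n ih =>
    exact intervalIntegral.continuous_primitive
      (continuous_apply_of_strongly_continuous hA ih).intervalIntegrable s

theorem hasDerivAt_dysonTerm_succ (n : ℕ) (t : ℝ) :
    HasDerivAt (dysonTerm A s ψ (n + 1)) (A t (dysonTerm A s ψ n t)) t :=
  ((continuous_apply_of_strongly_continuous hA
    (continuous_dysonTerm hA n)).integral_hasStrictDerivAt s t).hasDerivAt

theorem summable_dysonTerm (s : ℝ) (ψ : E) (t : ℝ) : Summable fun n => dysonTerm A s ψ n t := by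
  obtain ⟨M, hM⟩ := exists_opNorm_le_on_isCompact (isCompact_uIcc (a := s) (b := t))
    fun v => (hA v).continuousOn
  exact .of_norm_bounded ((Real.summable_pow_div_factorial _).mul_left _) (norm_dysonTerm_le hM)

theorem hasDerivAt_tsum_dysonTerm_succ (s : ℝ) (ψ : E) (t : ℝ) :
    HasDerivAt (fun τ => ∑' n, dysonTerm A s ψ (n + 1) τ)
      (∑' n, A t (dysonTerm A s ψ n t)) t := by
  obtain ⟨M, hM⟩ := exists_opNorm_le_on_isCompact (isCompact_closedBall s (|t - s| + 1))
    fun v => (hA v).continuousOn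
  refine hasDerivAt_tsum_of_isPreconnected
    (((Real.summable_pow_div_factorial (M * (|t - s| + 1))).mul_left ‖ψ‖).mul_left (M : ℝ))
    isOpen_ball (convex_ball s (|t - s| + 1)).isPreconnected
    (fun n τ _ => hasDerivAt_dysonTerm_succ hA n τ)
    (fun n τ hτ => norm_apply_dysonTerm_le_of_mem_ball hM hτ n)
    (mem_ball_self (by positivity)) ?_ (by simp [Real.dist_eq])
  exact (summable_nat_add_iff 1).2 (summable_dysonTerm hA s ψ s)

theorem isIntegralCurve_dysonSeries (s : ℝ) (ψ : E) :
    IsIntegralCurve (dysonSeries A s ψ) fun t => A t := by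
  intro t
  have split_first : dysonSeries A s ψ = fun τ => ψ + ∑' n, dysonTerm A s ψ (n + 1) τ :=
    funext fun τ => (summable_dysonTerm hA s ψ τ).tsum_eq_zero_add
  have apply_series : A t (dysonSeries A s ψ t) = ∑' n, A t (dysonTerm A s ψ n t) :=
    (A t).map_tsum (summable_dysonTerm hA s ψ t)
  have deriv_series := (hasDerivAt_tsum_dysonTerm_succ hA s ψ t).const_add ψ
  rwa [← apply_series, ← split_first] at deriv_series

theorem dysonSeries_eq_of_isIntegralCurve {x : ℝ → E} (hx : IsIntegralCurve x fun t => A t)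
    (hxs : x s = ψ) : dysonSeries A s ψ = x :=
  isIntegralCurve_eq_of_eq_at hA (isIntegralCurve_dysonSeries hA s ψ) hx
    (dysonSeries_self.trans hxs.symm)

theorem dysonSeries_add (s : ℝ) (ψ χ : E) :
    dysonSeries A s (ψ + χ) = dysonSeries A s ψ + dysonSeries A s χ := by
  refine dysonSeries_eq_of_isIntegralCurve hA (fun t => ?_) (by simp [dysonSeries_self])
  simpa using (isIntegralCurve_dysonSeries hA s ψ t).add (isIntegralCurve_dysonSeries hA s χ t)

theorem dysonSeries_smul [SMulCommClass ℝ 𝕜 E] (s : ℝ) (c : 𝕜) (ψ : E) :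
    dysonSeries A s (c • ψ) = c • dysonSeries A s ψ := by
  refine dysonSeries_eq_of_isIntegralCurve hA (fun t => ?_) (by simp [dysonSeries_self])
  simpa using (isIntegralCurve_dysonSeries hA s ψ t).const_smul c

theorem dysonSeries_dysonSeries (s t : ℝ) (ψ : E) :
    dysonSeries A s (dysonSeries A t ψ s) = dysonSeries A t ψ :=
  dysonSeries_eq_of_isIntegralCurve hA (isIntegralCurve_dysonSeries hA t ψ) rfl

/-- The propagator (evolution operator) of `x' = A t x` from time `s` to time `t`: the Dyson series
as a bounded operator on the initial value. The final time is the first argument, as in the usual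
notation `U(t, s)`. -/
noncomputable def propagator [SMulCommClass ℝ 𝕜 E] (t s : ℝ) : E →L[𝕜] E :=
  LinearMap.mkContinuousOfExistsBound
    { toFun := fun ψ => dysonSeries A s ψ t
      map_add' := fun ψ χ => congrFun (dysonSeries_add hA s ψ χ) t
      map_smul' := fun c ψ => congrFun (dysonSeries_smul hA s c ψ) t } <| by
    obtain ⟨M, hM⟩ := exists_opNorm_le_on_isCompact (isCompact_uIcc (a := s) (b := t))
      fun v => (hA v).continuousOn
    exact ⟨Real.exp (M * |t - s|), norm_dysonSeries_le hM⟩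

end Dyson

theorem evolution_family_exists_general
    {𝕜 E : Type*} [NontriviallyNormedField 𝕜] [NormedAddCommGroup E] [NormedSpace 𝕜 E]
    [NormedSpace ℝ E] [SMulCommClass ℝ 𝕜 E] [CompleteSpace E]
    (A : ℝ → (E →L[𝕜] E)) (hA : ∀ ψ : E, Continuous fun t : ℝ => A t ψ) :
    ∃ U : ℝ → ℝ → (E →L[𝕜] E),
      (∀ t : ℝ, U t t = 1) ∧
      (∀ r s t : ℝ, (U r s).comp (U s t) = U r t) ∧
      (∀ (s : ℝ) (ψ : E) (t : ℝ), HasDerivAt (fun τ : ℝ => U τ s ψ) (A t (U t s ψ)) t) := by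
  refine ⟨propagator hA, fun t => ?_, fun r s t => ?_, isIntegralCurve_dysonSeries hA⟩
  · ext ψ
    exact dysonSeries_self
  · ext ψ
    exact congrFun (dysonSeries_dysonSeries hA s t ψ) r

/-- For a strongly continuous family of bounded self-adjoint operators `H t` on a complex
Hilbert space, there exists an evolution family `U` with `U t t = 1`,
`U r s ∘ U s t = U r t`, and `∂ₜ (U t s ψ) = −i · H t (U t s ψ)`. -/
theorem evolution_family_exists
    {E : Type*} [NormedAddCommGroup E] [InnerProductSpace ℂ E] [CompleteSpace E]
    (H : ℝ → (E →L[ℂ] E))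
    (hcont : ∀ ψ : E, Continuous fun t : ℝ => H t ψ)
    (hsa : ∀ t : ℝ, IsSelfAdjoint (H t)) :
    ∃ U : ℝ → ℝ → (E →L[ℂ] E),
      (∀ t : ℝ, U t t = 1) ∧
      (∀ r s t : ℝ, (U r s).comp (U s t) = U r t) ∧
      (∀ (s : ℝ) (ψ : E) (t : ℝ),
        HasDerivAt (fun τ : ℝ => U τ s ψ) ((-Complex.I) • (H t) ((U t s) ψ)) t) :=
  evolution_family_exists_general (fun t => (-Complex.I) • H t) fun ψ =>
    (hcont ψ).const_smul (-Complex.I)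
end

section
/- Let n ∈ ℕ, let P be a multivariate polynomial over ℂ in n variables with evaluation map F v = MvPolynomial.eval v P for v : Fin n → ℂ, and let M be an n×n complex matrix. Then the following are equivalent: (i) F ((Matrix.exp ℂ ((t : ℂ) • M)).mulVec v) = F v for all t ∈ ℝ and all v : Fin n → ℂ; (ii) fderiv ℂ F v (M.mulVec v) = 0 for all v : Fin n → ℂ. -/
/-!
Along an integral curve `γ` of a vector field `X` the chain rule gives
`(f ∘ γ)' t = fderiv ℝ f (γ t) (X (γ t))`. If `X` annihilates `f`, then `f` is therefore constant
along `γ`; conversely, if `f` is constant along the integral curve that starts at `v`, then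
evaluating this derivative at `t = 0` gives `fderiv ℝ f v (X v) = 0`. For a bounded operator `A`,
the curve `t ↦ exp (t • A) v` is an integral curve of `A` that starts at `v`.
-/

open NormedSpace

section VectorField

variable {E F : Type*} [NormedAddCommGroup E] [NormedSpace ℝ E]
  [NormedAddCommGroup F] [NormedSpace ℝ F] {f : E → F}

theorem hasDerivAt_comp_isIntegralCurve {γ : ℝ → E} {X : ℝ → E → E} {t : ℝ}
    (hf : DifferentiableAt ℝ f (γ t)) (hγ : IsIntegralCurve γ X) :
    HasDerivAt (f ∘ γ) (fderiv ℝ f (γ t) (X t (γ t))) t :=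
  hf.hasFDerivAt.comp_hasDerivAt t (hγ t)

theorem comp_isIntegralCurve_eq_iff_fderiv_eq_zero (hf : Differentiable ℝ f) {X : E → E}
    {φ : ℝ → E → E} (hφ₀ : ∀ v, φ 0 v = v)
    (hφ : ∀ v, IsIntegralCurve (fun t ↦ φ t v) fun _ ↦ X) :
    (∀ t v, f (φ t v) = f v) ↔ ∀ v, fderiv ℝ f v (X v) = 0 := by
  have hderiv (v : E) (t : ℝ) :
      HasDerivAt (fun s ↦ f (φ s v)) (fderiv ℝ f (φ t v) (X (φ t v))) t :=
    hasDerivAt_comp_isIntegralCurve (hf _) (hφ v)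
  refine ⟨fun hinv v ↦ ?_, fun hX t v ↦ ?_⟩
  · have hconst : HasDerivAt (fun s ↦ f (φ s v)) 0 0 := by
      simpa only [hinv] using hasDerivAt_const (0 : ℝ) (f v)
    simpa only [hφ₀] using (hderiv v 0).unique hconst
  · have hconst : f (φ t v) = f (φ 0 v) :=
      is_const_of_deriv_eq_zero (fun s ↦ (hderiv v s).differentiableAt)
        (fun s ↦ (hderiv v s).deriv.trans (hX _)) t 0
    rw [hconst, hφ₀]

theorem isIntegralCurve_exp_smul_apply [CompleteSpace E] (A : E →L[ℝ] E) (v : E) :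
    IsIntegralCurve (fun t : ℝ ↦ exp (t • A) v) fun _ ↦ A := fun t ↦
  (hasDerivAt_exp_smul_const' A t).clm_apply (hasDerivAt_const t v) |>.congr_deriv (by simp)

theorem polynomial_invariant_iff_derivative_vanishes_general [CompleteSpace E]
    (hf : Differentiable ℝ f) (A : E →L[ℝ] E) :
    (∀ (t : ℝ) v, f (exp (t • A) v) = f v) ↔ ∀ v, fderiv ℝ f v (A v) = 0 :=
  comp_isIntegralCurve_eq_iff_fderiv_eq_zero hf (by simp) (isIntegralCurve_exp_smul_apply A)

end VectorField

section Matrix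

variable {ι 𝕜 : Type*} [Fintype ι] [DecidableEq ι] [RCLike 𝕜]

variable (ι 𝕜) in
/-- The action of square matrices on column vectors, as a representation by bounded real operators.
The scalars are restricted to `ℝ` because that is where the time parameter of a flow lives. -/
noncomputable def mulVecAlgHom : Matrix ι ι 𝕜 →ₐ[ℝ] ((ι → 𝕜) →L[ℝ] (ι → 𝕜)) :=
  AlgHom.ofLinearMap (LinearMap.toContinuousLinearMap.toLinearMap ∘ₗ Matrix.mulVecBilin ℝ ℝ)
    (by ext; simp) (fun M N ↦ by ext; simp [Matrix.mulVec_mulVec])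

@[simp]
theorem mulVecAlgHom_apply (M : Matrix ι ι 𝕜) (v : ι → 𝕜) :
    mulVecAlgHom ι 𝕜 M v = M.mulVec v :=
  rfl

open scoped Matrix.Norms.Operator in
theorem mulVecAlgHom_exp (M : Matrix ι ι 𝕜) :
    mulVecAlgHom ι 𝕜 (exp M) = exp (mulVecAlgHom ι 𝕜 M) := by
  let : NormedAlgebra ℚ (Matrix ι ι 𝕜) := NormedAlgebra.restrictScalars ℚ ℝ _
  have hcont : Continuous (mulVecAlgHom ι 𝕜) :=
    (mulVecAlgHom ι 𝕜).toLinearMap.continuous_of_finiteDimensional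
  exact map_exp (mulVecAlgHom ι 𝕜) hcont M

theorem exp_smul_mulVec (t : ℝ) (M : Matrix ι ι 𝕜) (v : ι → 𝕜) :
    (exp (t • M)).mulVec v = exp (t • mulVecAlgHom ι 𝕜 M) v := by
  rw [← map_smul, ← mulVecAlgHom_exp, mulVecAlgHom_apply]

end Matrix

/-- A polynomial `P` in `n` complex variables is invariant under the one-parameter group
`t ↦ exp(t M)` if and only if its derivative along the vector field `v ↦ M v` vanishes
everywhere. -/
theorem polynomial_invariant_iff_derivative_vanishes
    (n : ℕ) (P : MvPolynomial (Fin n) ℂ) (M : Matrix (Fin n) (Fin n) ℂ) :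
    (∀ (t : ℝ) (v : Fin n → ℂ),
        MvPolynomial.eval ((NormedSpace.exp ((t : ℂ) • M)).mulVec v) P =
          MvPolynomial.eval v P) ↔
      ∀ v : Fin n → ℂ,
        fderiv ℂ (fun w : Fin n → ℂ => MvPolynomial.eval w P) v (M.mulVec v) = 0 := by
  have hP : Differentiable ℂ fun v : Fin n → ℂ ↦ MvPolynomial.eval v P :=
    fun v ↦ (AnalyticOnNhd.eval_mvPolynomial P v (Set.mem_univ v)).differentiableAt
  simpa only [Complex.coe_smul, exp_smul_mulVec, mulVecAlgHom_apply,
    (hP _).fderiv_restrictScalars ℝ, ContinuousLinearMap.coe_restrictScalars'] using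
    polynomial_invariant_iff_derivative_vanishes_general (hP.restrictScalars ℝ)
      (mulVecAlgHom (Fin n) ℂ M)
end

section
/- Let n ∈ ℕ, let P be a multivariate polynomial over ℂ in n variables with evaluation map F v = MvPolynomial.eval v P for v : Fin n → ℂ, and let M be an n×n complex matrix. If F ((Matrix.exp ℂ ((t : ℂ) • M)).mulVec v) = F v for all t ∈ ℝ and all v : Fin n → ℂ, then also F ((Matrix.exp ℂ ((t : ℂ) • (Complex.I • M))).mulVec v) = F v for all t ∈ ℝ and all v : Fin n → ℂ. (A polynomial invariant under the one-parameter group generated by M is invariant under the one-parameter group generated by iM; this is the key step of the Unitarian Trick showing that polynomial invariants of a connected complexified matrix group coincide with those of its maximal compact subgroup.) -/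
/-!
For fixed `v` the function `z ↦ P (exp (z M) v)` is entire, and invariance under `exp (t M)` for
real `t` says that it is constant on the real axis. By the identity theorem it is constant on `ℂ`,
in particular along the imaginary axis `z = t i`.
-/

open Filter Topology Matrix

theorem analyticOnNhd_eq_of_forall_ofReal_eq {E : Type*} [NormedAddCommGroup E] [NormedSpace ℂ E]
    {f g : ℂ → E} (hf : AnalyticOnNhd ℂ f Set.univ) (hg : AnalyticOnNhd ℂ g Set.univ)
    (hfg : ∀ t : ℝ, f t = g t) : f = g := by
  have tendsto_ofReal : Tendsto ((↑) : ℝ → ℂ) (𝓝[≠] 0) (𝓝[≠] ((0 : ℝ) : ℂ)) :=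
    Complex.ofRealCLM.hasDerivAt.tendsto_nhdsNE (by simp)
  exact hf.eq_of_frequently_eq hg (tendsto_ofReal.frequently (.of_forall hfg))

section MatrixExponential

variable {ι : Type*} [Fintype ι] [DecidableEq ι]

open scoped Matrix.Norms.Operator in
theorem analyticOnNhd_exp_smul_mulVec {𝕜 : Type*} [RCLike 𝕜] (M : Matrix ι ι 𝕜) (v : ι → 𝕜) :
    AnalyticOnNhd 𝕜 (fun z : 𝕜 ↦ NormedSpace.exp (z • M) *ᵥ v) Set.univ := by
  intro z _
  have analyticAt_exp : AnalyticAt 𝕜 (fun z : 𝕜 ↦ NormedSpace.exp (z • M)) z :=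
    (NormedSpace.exp_analytic (z • M)).fun_comp (f := (· • M))
      (analyticAt_id.smul analyticAt_const)
  let applyTo : Matrix ι ι 𝕜 →L[𝕜] ι → 𝕜 :=
    ((Matrix.mulVecBilin 𝕜 𝕜).flip v).toContinuousLinearMap
  exact (applyTo.analyticAt _).comp analyticAt_exp

theorem polynomial_invariant_under_I_smul_general {E : Type*} [NormedAddCommGroup E]
    [NormedSpace ℂ E] {F : (ι → ℂ) → E} (hF : AnalyticOnNhd ℂ F Set.univ) (M : Matrix ι ι ℂ)
    (v : ι → ℂ) (hinv : ∀ t : ℝ, F (NormedSpace.exp ((t : ℂ) • M) *ᵥ v) = F v) (z : ℂ) :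
    F (NormedSpace.exp (z • M) *ᵥ v) = F v := by
  have orbit_analytic : AnalyticOnNhd ℂ (fun z : ℂ ↦ F (NormedSpace.exp (z • M) *ᵥ v)) Set.univ :=
    hF.comp (analyticOnNhd_exp_smul_mulVec M v) (Set.mapsTo_univ _ _)
  exact congrFun (analyticOnNhd_eq_of_forall_ofReal_eq orbit_analytic analyticOnNhd_const hinv) z

end MatrixExponential

/-- **Key step of the Unitarian Trick.** If a polynomial `P` in `n` complex variables is
invariant under the one-parameter group generated by a matrix `M`, then it is also invariant
under the one-parameter group generated by `i • M`. -/
theorem polynomial_invariant_under_I_smul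
    (n : ℕ) (P : MvPolynomial (Fin n) ℂ) (M : Matrix (Fin n) (Fin n) ℂ)
    (hinv : ∀ (t : ℝ) (v : Fin n → ℂ),
        MvPolynomial.eval ((NormedSpace.exp ((t : ℂ) • M)).mulVec v) P =
          MvPolynomial.eval v P) :
    ∀ (t : ℝ) (v : Fin n → ℂ),
        MvPolynomial.eval ((NormedSpace.exp ((t : ℂ) • (Complex.I • M))).mulVec v) P =
          MvPolynomial.eval v P := by
  intro t v
  rw [smul_smul]
  exact polynomial_invariant_under_I_smul_general (AnalyticOnNhd.eval_mvPolynomial P) M v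
    (hinv · v) (t * Complex.I)
end

section
/- For every family of real coefficients ω : Fin 4 → Fin 4 → ℝ, the matrix S = Matrix.exp ℂ ((1/2) • ∑_{ρ,σ} (ω ρ σ : ℂ) • S^{ρσ}) satisfies Sᵀ * C * S = C. (Hence the skew-symmetric bilinear form ψᵀ C φ on Dirac spinors is invariant under the spinor representation of any proper orthochronous Lorentz transformation.) -/
noncomputable def γ0 : Matrix (Fin 4) (Fin 4) ℂ :=
  !![1, 0, 0, 0; 0, 1, 0, 0; 0, 0, -1, 0; 0, 0, 0, -1]

noncomputable def γ1 : Matrix (Fin 4) (Fin 4) ℂ :=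
  !![0, 0, 0, 1; 0, 0, 1, 0; 0, -1, 0, 0; -1, 0, 0, 0]

noncomputable def γ2 : Matrix (Fin 4) (Fin 4) ℂ :=
  !![0, 0, 0, -Complex.I; 0, 0, Complex.I, 0; 0, Complex.I, 0, 0; -Complex.I, 0, 0, 0]

noncomputable def γ3 : Matrix (Fin 4) (Fin 4) ℂ :=
  !![0, 0, 1, 0; 0, 0, 0, -1; -1, 0, 0, 0; 0, 1, 0, 0]

/-- The Dirac gamma matrices, indexed by `μ : Fin 4`. -/
noncomputable def γ : Fin 4 → Matrix (Fin 4) (Fin 4) ℂ := ![γ0, γ1, γ2, γ3]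

/-- The matrix `C = i γ¹ γ³`. -/
noncomputable def Cmat : Matrix (Fin 4) (Fin 4) ℂ := Complex.I • (γ1 * γ3)

/-- The matrix `γ⁵ = i γ⁰ γ¹ γ² γ³`. -/
noncomputable def γ5 : Matrix (Fin 4) (Fin 4) ℂ := Complex.I • (γ0 * γ1 * γ2 * γ3)

/-- The Lorentz generators `S^{ρσ} = (1/4)(γ^ρ γ^σ − γ^σ γ^ρ)`. -/
noncomputable def Sgen (ρ σ : Fin 4) : Matrix (Fin 4) (Fin 4) ℂ :=
  (1 / 4 : ℂ) • (γ ρ * γ σ - γ σ * γ ρ)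

/-!
Conjugation by `C` turns each `γ μ` into its transpose, so `γ μ` is self-adjoint for the bilinear
form `ψᵀ C φ`. The commutator of two self-adjoint matrices is skew-adjoint, so the whole span of
the `Sgen ρ σ` is skew-adjoint, and the exponential of a skew-adjoint matrix is an isometry of the
form.
-/

section AdjointPair

variable {k m n R : Type*} [Fintype k] [Fintype m] [Fintype n] [CommRing R]

theorem isAdjointPair_mul {J₁ : Matrix k k R} {J₂ : Matrix m m R} {J₃ : Matrix n n R}
    {A : Matrix n m R} {A' : Matrix m n R} {B : Matrix m k R} {B' : Matrix k m R}
    (hA : J₂.IsAdjointPair J₃ A A') (hB : J₁.IsAdjointPair J₂ B B') :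
    J₁.IsAdjointPair J₃ (A * B) (B' * A') :=
  calc (A * B).transpose * J₃
      = B.transpose * (A.transpose * J₃) := by rw [Matrix.transpose_mul, Matrix.mul_assoc]
    _ = B.transpose * J₂ * A' := by rw [hA, Matrix.mul_assoc]
    _ = J₁ * (B' * A') := by rw [hB, Matrix.mul_assoc]

theorem isSkewAdjoint_lie_of_isSelfAdjoint {J A B : Matrix n n R}
    (hA : J.IsSelfAdjoint A) (hB : J.IsSelfAdjoint B) : J.IsSkewAdjoint ⁅A, B⁆ := by
  change ⁅A, B⁆.transpose * J = J * -⁅A, B⁆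
  rw [Ring.lie_def, Matrix.transpose_sub, Matrix.sub_mul, isAdjointPair_mul hA hB,
    isAdjointPair_mul hB hA, neg_sub, Matrix.mul_sub]

end AdjointPair

theorem transpose_exp_mul_mul_exp_of_isSkewAdjoint {n 𝔸 : Type*} [Fintype n]
    [DecidableEq n] [NormedCommRing 𝔸] [NormedAlgebra ℚ 𝔸] [CompleteSpace 𝔸]
    {J A : Matrix n n 𝔸} (hA : J.IsSkewAdjoint A) :
    (NormedSpace.exp A).transpose * J * NormedSpace.exp A = J := by
  have intertwines : SemiconjBy J A (-A.transpose) := by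
    change J * A = -A.transpose * J
    rw [Matrix.neg_mul, show A.transpose * J = J * -A from hA, Matrix.mul_neg, neg_neg]
  rw [← Matrix.exp_transpose]
  -- Matrices carry no global norm; this one induces their topology, hence the same `exp`.
  let : NormedRing (Matrix n n 𝔸) := Matrix.linftyOpNormedRing
  let : NormedAlgebra ℚ (Matrix n n 𝔸) := Matrix.linftyOpNormedAlgebra
  have : @CompleteSpace (Matrix n n 𝔸) PseudoMetricSpace.toUniformSpace :=
    inferInstanceAs (CompleteSpace (n → n → 𝔸))
  simpa only [neg_neg] using! intertwines.exp_neg_mul_mul_exp_eq_self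

theorem Cmat_eq :
    Cmat = !![0, Complex.I, 0, 0; -Complex.I, 0, 0, 0;
      0, 0, 0, Complex.I; 0, 0, -Complex.I, 0] := by
  ext i j
  fin_cases i <;> fin_cases j <;> simp [Cmat, γ1, γ3]

theorem isSelfAdjoint_γ (μ : Fin 4) : Cmat.IsSelfAdjoint (γ μ) := by
  change (γ μ).transpose * Cmat = Cmat * γ μ
  rw [Cmat_eq]
  fin_cases μ <;> ext i j <;> fin_cases i <;> fin_cases j <;>
    simp [γ, γ0, γ1, γ2, γ3, Matrix.mul_apply, Fin.sum_univ_four]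

theorem Sgen_mem_skewAdjointMatricesSubmodule (ρ σ : Fin 4) :
    Sgen ρ σ ∈ skewAdjointMatricesSubmodule Cmat := by
  have lie_mem : ⁅γ ρ, γ σ⁆ ∈ skewAdjointMatricesSubmodule Cmat :=
    (mem_skewAdjointMatricesSubmodule _ _).2 <|
      isSkewAdjoint_lie_of_isSelfAdjoint (isSelfAdjoint_γ ρ) (isSelfAdjoint_γ σ)
  exact Submodule.smul_mem _ _ lie_mem

theorem spinor_rep_preserves_C_general (ω : Fin 4 → Fin 4 → ℂ) :
    (NormedSpace.exp ((1 / 2 : ℂ) • ∑ ρ, ∑ σ, ω ρ σ • Sgen ρ σ)).transpose * Cmat *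
      NormedSpace.exp ((1 / 2 : ℂ) • ∑ ρ, ∑ σ, ω ρ σ • Sgen ρ σ) = Cmat := by
  refine transpose_exp_mul_mul_exp_of_isSkewAdjoint <|
    (mem_skewAdjointMatricesSubmodule _ _).1 <| Submodule.smul_mem _ _ ?_
  exact Submodule.sum_mem _ fun ρ _ => Submodule.sum_mem _ fun σ _ =>
    Submodule.smul_mem _ _ (Sgen_mem_skewAdjointMatricesSubmodule ρ σ)

/-- The spinor representation `S = exp((1/2) ∑ ω_{ρσ} S^{ρσ})` of any proper orthochronous
Lorentz transformation preserves the skew-symmetric bilinear form determined by `C`: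
`Sᵀ C S = C`. -/
theorem spinor_rep_preserves_C (ω : Fin 4 → Fin 4 → ℝ) :
    (NormedSpace.exp
        ((1 / 2 : ℂ) • ∑ ρ : Fin 4, ∑ σ : Fin 4, (ω ρ σ : ℂ) • Sgen ρ σ)).transpose *
        Cmat *
        NormedSpace.exp
          ((1 / 2 : ℂ) • ∑ ρ : Fin 4, ∑ σ : Fin 4, (ω ρ σ : ℂ) • Sgen ρ σ) = Cmat :=
  spinor_rep_preserves_C_general fun ρ σ => (ω ρ σ : ℂ)
end

section
/- Let n ∈ ℕ, let X be an n×n complex matrix, and let H : ℝ → Matrix (Fin n) (Fin n) ℂ satisfy X * H t = −(H t)ᵀ * X for all t ∈ ℝ. Suppose U : ℝ → Matrix (Fin n) (Fin n) ℂ satisfies U 0 = 1 and, for every t ∈ ℝ, U has derivative (−Complex.I) • (H t * U t) at t. Then (U t)ᵀ * X * U t = X for all t ∈ ℝ. (A bilinear form ψᵀ X φ is invariant under any evolution generated by Hamiltonians H(t) satisfying X H(t) = −H(t)ᵀ X.) -/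
attribute [local instance] Matrix.normedAddCommGroup Matrix.normedSpace

open scoped Matrix

section MatrixCalculus

variable {𝕜 R l m n : Type*} [NontriviallyNormedField 𝕜]

theorem hasDerivAt_matrix_iff [NormedAddCommGroup R] [NormedSpace 𝕜 R]
    {A : 𝕜 → Matrix m n R} {A' : Matrix m n R} {t : 𝕜} :
    HasDerivAt A A' t ↔ ∀ i j, HasDerivAt (fun s ↦ A s i j) (A' i j) t := by
  -- Works with the product topology directly: `hasDerivAt_pi` asks for a norm on the rows.
  simp only [HasDerivAt, HasDerivAtFilter, hasFDerivAtFilter_iff_isLittleOTVS]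
  exact Asymptotics.isLittleOTVS_pi.trans <| forall_congr' fun _ ↦ Asymptotics.isLittleOTVS_pi

theorem hasDerivAt_matrix_transpose [NormedAddCommGroup R] [NormedSpace 𝕜 R]
    {A : 𝕜 → Matrix m n R} {A' : Matrix m n R} {t : 𝕜} (hA : HasDerivAt A A' t) :
    HasDerivAt (fun s ↦ (A s)ᵀ) A'ᵀ t :=
  hasDerivAt_matrix_iff.2 fun i j ↦ hasDerivAt_matrix_iff.1 hA j i

theorem hasDerivAt_matrix_mul [Fintype m] [NormedRing R] [NormedAlgebra 𝕜 R]
    {A : 𝕜 → Matrix l m R} {B : 𝕜 → Matrix m n R} {A' : Matrix l m R} {B' : Matrix m n R} {t : 𝕜}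
    (hA : HasDerivAt A A' t) (hB : HasDerivAt B B' t) :
    HasDerivAt (fun s ↦ A s * B s) (A' * B t + A t * B') t := by
  rw [hasDerivAt_matrix_iff] at hA hB ⊢
  intro i j
  simp only [Matrix.mul_apply, Matrix.add_apply, ← Finset.sum_add_distrib]
  exact HasDerivAt.fun_sum fun k _ ↦ (hA i k).mul (hB k j)

end MatrixCalculus

theorem transpose_mul_mul_add_eq_zero {R l m p q : Type*} [CommRing R] [Fintype l] [Fintype m]
    {X : Matrix l m R} {A : Matrix m m R} {B : Matrix l l R} (hX : X * A = -(Bᵀ * X))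
    (V : Matrix l p R) (U : Matrix m q R) :
    (B * V)ᵀ * X * U + Vᵀ * X * (A * U) = 0 := by
  have hVU : Vᵀ * X * (A * U) = -((B * V)ᵀ * X * U) := calc
    Vᵀ * X * (A * U) = Vᵀ * (X * A) * U := by simp only [Matrix.mul_assoc]
    _ = -((B * V)ᵀ * X * U) := by
      simp only [hX, Matrix.transpose_mul, Matrix.mul_neg, Matrix.neg_mul, Matrix.mul_assoc]
  rw [hVU, add_neg_cancel]

section Evolution

variable {𝕜 R l m p q : Type*} [NormedCommRing R] [Fintype l] [Fintype m]

theorem hasDerivAt_transpose_mul_mul [NontriviallyNormedField 𝕜] [NormedAlgebra 𝕜 R]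
    (X : Matrix l m R) {V : 𝕜 → Matrix l p R} {U : 𝕜 → Matrix m q R}
    {V' : Matrix l p R} {U' : Matrix m q R} {t : 𝕜}
    (hV : HasDerivAt V V' t) (hU : HasDerivAt U U' t) :
    HasDerivAt (fun s ↦ (V s)ᵀ * X * U s) (V'ᵀ * X * U t + (V t)ᵀ * X * U') t := by
  have hVt : HasDerivAt (fun s ↦ (V s)ᵀ) V'ᵀ t := hasDerivAt_matrix_transpose hV
  have hX : HasDerivAt (fun _ ↦ X) 0 t :=
    hasDerivAt_matrix_iff.2 fun i j ↦ hasDerivAt_const t (X i j)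
  have hVX : HasDerivAt (fun s ↦ (V s)ᵀ * X) (V'ᵀ * X) t := by
    simpa only [Matrix.mul_zero, add_zero] using hasDerivAt_matrix_mul hVt hX
  exact hasDerivAt_matrix_mul hVX hU

theorem bilinear_form_invariant_under_evolution_general [RCLike 𝕜] [NormedAlgebra 𝕜 R]
    {X : Matrix l m R} {A : 𝕜 → Matrix m m R} {B : 𝕜 → Matrix l l R}
    (hX : ∀ t, X * A t = -((B t)ᵀ * X))
    {V : 𝕜 → Matrix l p R} {U : 𝕜 → Matrix m q R}
    (hV : ∀ t, HasDerivAt V (B t * V t) t) (hU : ∀ t, HasDerivAt U (A t * U t) t) (s t : 𝕜) :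
    (V t)ᵀ * X * U t = (V s)ᵀ * X * U s := by
  have hderiv (r : 𝕜) : HasDerivAt (fun r ↦ (V r)ᵀ * X * U r) 0 r := by
    simpa only [transpose_mul_mul_add_eq_zero (hX r)] using
      hasDerivAt_transpose_mul_mul X (hV r) (hU r)
  ext i j
  have hentry (r : 𝕜) := hasDerivAt_matrix_iff.1 (hderiv r) i j
  exact is_const_of_deriv_eq_zero (fun r ↦ (hentry r).differentiableAt)
    (fun r ↦ (hentry r).deriv) t s

end Evolution

/-- A bilinear form `ψᵀ X φ` is invariant under any evolution `U` generated by Hamiltonians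
`H t` satisfying `X H(t) = −H(t)ᵀ X`. -/
theorem bilinear_form_invariant_under_evolution
    (n : ℕ) (X : Matrix (Fin n) (Fin n) ℂ) (H : ℝ → Matrix (Fin n) (Fin n) ℂ)
    (hXH : ∀ t : ℝ, X * H t = -((H t).transpose * X))
    (U : ℝ → Matrix (Fin n) (Fin n) ℂ)
    (hU0 : U 0 = 1)
    (hU : ∀ t : ℝ, HasDerivAt U ((-Complex.I) • (H t * U t)) t) :
    ∀ t : ℝ, (U t).transpose * X * U t = X := by
  simp only [← Matrix.smul_mul] at hU
  simpa [hU0] using bilinear_form_invariant_under_evolution_general (by simp [hXH]) hU hU 0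
end

section
/- For any coefficients η : Fin 4 → ℂ and λ : Fin 4 → Fin 4 → ℂ, let H = ∑_μ η μ • γ^μ + ∑_{μ ≠ ν} λ μ ν • (γ^μ * γ^ν) (the second sum over pairs of distinct indices). Then (C * γ⁵) * H = −Hᵀ * (C * γ⁵). (Every Hamiltonian term of first or second degree in distinct gamma matrices, in particular every Dirac Hamiltonian with arbitrary mass after removal of the term proportional to the identity, anti-intertwines with C γ⁵.) -/
/-!
The identity `J H = -Hᵀ J` says that `H` is skew-adjoint for the form `J`, a linear condition on
`H`. The product of two anticommuting skew-adjoint matrices is again skew-adjoint, so it is enough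
to treat a single `γ μ`. The Clifford relations reduce `C γ⁵` to `γ² γ⁰`, the product of the two
symmetric gamma matrices: it anticommutes with both of them, and commutes with the antisymmetric
`γ¹` and `γ³`.
-/

open scoped Matrix

section SkewAdjoint

variable {n R : Type*} [Fintype n] [CommRing R] {J A B S T : Matrix n n R}

theorem isSkewAdjoint_mul_of_anticomm (hA : J.IsSkewAdjoint A) (hB : J.IsSkewAdjoint B)
    (hAB : A * B = -(B * A)) : J.IsSkewAdjoint (A * B) :=
  calc (A * B)ᵀ * J
    _ = Bᵀ * (Aᵀ * J) := by rw [Matrix.transpose_mul, mul_assoc]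
    _ = Bᵀ * J * -A := by rw [hA, mul_assoc]
    _ = J * (B * A) := by rw [hB, mul_assoc, neg_mul_neg]
    _ = J * -(A * B) := by rw [hAB, neg_neg]

theorem isSkewAdjoint_of_symm_of_anticomm (hA : Aᵀ = A) (hAJ : A * J = -(J * A)) :
    J.IsSkewAdjoint A := by
  rw [Matrix.IsSkewAdjoint, Matrix.IsAdjointPair, hA, hAJ, mul_neg]

theorem isSkewAdjoint_of_antisymm_of_commute (hA : Aᵀ = -A) (hAJ : Commute A J) :
    J.IsSkewAdjoint A := by
  rw [Matrix.IsSkewAdjoint, Matrix.IsAdjointPair, hA, neg_mul, hAJ.eq, mul_neg]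

theorem isSkewAdjoint_mul_left_of_anticomm (hS : Sᵀ = S) (hST : S * T = -(T * S)) :
    (S * T).IsSkewAdjoint S :=
  isSkewAdjoint_of_symm_of_anticomm hS <| by rw [mul_assoc, ← mul_neg, hST]

theorem isSkewAdjoint_mul_right_of_anticomm (hT : Tᵀ = T) (hST : S * T = -(T * S)) :
    (S * T).IsSkewAdjoint T :=
  isSkewAdjoint_of_symm_of_anticomm hT <| by rw [← mul_assoc, ← neg_mul, hST, neg_neg]

theorem isSkewAdjoint_mul_of_antisymm_of_anticomm (hA : Aᵀ = -A) (hAS : A * S = -(S * A))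
    (hAT : A * T = -(T * A)) : (S * T).IsSkewAdjoint A :=
  isSkewAdjoint_of_antisymm_of_commute hA <|
    calc A * (S * T)
      _ = -(S * (A * T)) := by rw [← mul_assoc, hAS, neg_mul, mul_assoc]
      _ = S * T * A := by rw [hAT, mul_neg, neg_neg, mul_assoc]

theorem isSkewAdjoint_linear_add_quadratic {ι : Type*} [Fintype ι] [DecidableEq ι]
    {g : ι → Matrix n n R} (hg : ∀ μ, J.IsSkewAdjoint (g μ))
    (hg_anticomm : Pairwise fun μ ν => g μ * g ν = -(g ν * g μ)) (η : ι → R) (lam : ι → ι → R) :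
    J.IsSkewAdjoint
      ((∑ μ, η μ • g μ) + ∑ μ, ∑ ν, if μ ≠ ν then lam μ ν • (g μ * g ν) else 0) := by
  classical
  have hg_mul (μ ν : ι) (hμν : μ ≠ ν) : J.IsSkewAdjoint (g μ * g ν) :=
    isSkewAdjoint_mul_of_anticomm (hg μ) (hg ν) (hg_anticomm hμν)
  simp only [← mem_skewAdjointMatricesSubmodule] at hg hg_mul ⊢
  refine add_mem (sum_mem fun μ _ => Submodule.smul_mem _ _ (hg μ))
    (sum_mem fun μ _ => sum_mem fun ν _ => ?_)
  split_ifs with hμν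
  · exact Submodule.smul_mem _ _ (hg_mul μ ν hμν)
  · exact zero_mem _

end SkewAdjoint

theorem γ_anticomm : Pairwise fun μ ν => γ μ * γ ν = -(γ ν * γ μ) := by
  intro μ ν hμν
  fin_cases μ <;> fin_cases ν <;>
    first
    | exact absurd rfl hμν
    | simp [γ, γ0, γ1, γ2, γ3]

theorem γ1_mul_self : γ1 * γ1 = -1 := by
  simp [γ1, ← Matrix.ext_iff, Fin.forall_fin_succ]

theorem γ3_mul_self : γ3 * γ3 = -1 := by
  simp [γ3, ← Matrix.ext_iff, Fin.forall_fin_succ]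

theorem γ0_transpose : γ0ᵀ = γ0 := by
  simp [γ0, ← Matrix.ext_iff, Fin.forall_fin_succ]

theorem γ1_transpose : γ1ᵀ = -γ1 := by
  simp [γ1, ← Matrix.ext_iff, Fin.forall_fin_succ]

theorem γ2_transpose : γ2ᵀ = γ2 := by
  simp [γ2, ← Matrix.ext_iff, Fin.forall_fin_succ]

theorem γ3_transpose : γ3ᵀ = -γ3 := by
  simp [γ3, ← Matrix.ext_iff, Fin.forall_fin_succ]

theorem Cmat_mul_γ5 : Cmat * γ5 = γ2 * γ0 := by
  have h01 : γ0 * γ1 = -(γ1 * γ0) := γ_anticomm (i := 0) (j := 1) (by decide)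
  have h02 : γ0 * γ2 = -(γ2 * γ0) := γ_anticomm (i := 0) (j := 2) (by decide)
  have h30 : γ3 * γ0 = -(γ0 * γ3) := γ_anticomm (i := 3) (j := 0) (by decide)
  have h31 : γ3 * γ1 = -(γ1 * γ3) := γ_anticomm (i := 3) (j := 1) (by decide)
  have h32 : γ3 * γ2 = -(γ2 * γ3) := γ_anticomm (i := 3) (j := 2) (by decide)
  calc Cmat * γ5
    _ = -(γ1 * (γ3 * γ0) * γ1 * γ2 * γ3) := by
      simp only [Cmat, γ5, smul_mul_smul_comm, Complex.I_mul_I, neg_one_smul, mul_assoc]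
    _ = γ1 * γ0 * (γ3 * γ1) * γ2 * γ3 := by simp only [h30, mul_neg, neg_mul, neg_neg, mul_assoc]
    _ = -(γ1 * γ0 * γ1 * (γ3 * γ2) * γ3) := by simp only [h31, mul_neg, neg_mul, mul_assoc]
    _ = γ1 * (γ0 * γ1) * γ2 * (γ3 * γ3) := by simp only [h32, mul_neg, neg_mul, neg_neg, mul_assoc]
    _ = γ1 * γ1 * (γ0 * γ2) := by
      simp only [h01, γ3_mul_self, mul_neg, neg_mul, neg_neg, mul_one, mul_assoc]
    _ = γ2 * γ0 := by rw [γ1_mul_self, h02, neg_mul_neg, one_mul]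

theorem isSkewAdjoint_Cmat_mul_γ5_γ (μ : Fin 4) : (Cmat * γ5).IsSkewAdjoint (γ μ) := by
  have h10 : γ1 * γ0 = -(γ0 * γ1) := γ_anticomm (i := 1) (j := 0) (by decide)
  have h12 : γ1 * γ2 = -(γ2 * γ1) := γ_anticomm (i := 1) (j := 2) (by decide)
  have h20 : γ2 * γ0 = -(γ0 * γ2) := γ_anticomm (i := 2) (j := 0) (by decide)
  have h30 : γ3 * γ0 = -(γ0 * γ3) := γ_anticomm (i := 3) (j := 0) (by decide)
  have h32 : γ3 * γ2 = -(γ2 * γ3) := γ_anticomm (i := 3) (j := 2) (by decide)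
  rw [Cmat_mul_γ5]
  fin_cases μ
  · exact isSkewAdjoint_mul_right_of_anticomm γ0_transpose h20
  · exact isSkewAdjoint_mul_of_antisymm_of_anticomm γ1_transpose h12 h10
  · exact isSkewAdjoint_mul_left_of_anticomm γ2_transpose h20
  · exact isSkewAdjoint_mul_of_antisymm_of_anticomm γ3_transpose h32 h30

/-- Every Hamiltonian term of first or second degree in distinct gamma matrices
anti-intertwines with `C γ⁵`: `(C γ⁵) H = −Hᵀ (C γ⁵)`. -/
theorem first_second_degree_anti_intertwines_Cγ5
    (η : Fin 4 → ℂ) (lam : Fin 4 → Fin 4 → ℂ) :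
    (Cmat * γ5) *
        ((∑ μ : Fin 4, η μ • γ μ) +
          ∑ μ : Fin 4, ∑ ν : Fin 4, if μ ≠ ν then lam μ ν • (γ μ * γ ν) else 0) =
      -(((∑ μ : Fin 4, η μ • γ μ) +
          ∑ μ : Fin 4, ∑ ν : Fin 4, if μ ≠ ν then lam μ ν • (γ μ * γ ν) else 0).transpose *
        (Cmat * γ5)) := by
  have hH := isSkewAdjoint_linear_add_quadratic isSkewAdjoint_Cmat_mul_γ5_γ γ_anticomm η lam
  rw [hH, mul_neg, neg_neg]
end

section
/- Let N be an odd natural number, let X : Fin N → Matrix (Fin 4) (Fin 4) ℂ be matrices with (X i)ᵀ = −(X i) for every i, and let ψ : (Fin N → Fin 4) → ℂ. Then ∑_{f : Fin N → Fin 4} ∑_{g : Fin N → Fin 4} (∏_{i : Fin N} X i (g i) (f i)) * ψ f * ψ g = 0. (Every degree-2 tensor sandwich contraction built from antisymmetric matrices — in particular from C and C γ⁵ — vanishes identically for an odd number of Dirac spinors; this is why no nonzero degree-2 Lorentz invariant polynomial exists for three or five spinors.) -/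
/-!
The contraction is the value at `ψ` of the quadratic form of the Kronecker product of the `X i`.
Transposing a Kronecker product transposes each factor, so a product of an odd number of
antisymmetric factors is again antisymmetric, and the quadratic form of an antisymmetric matrix is
equal to its own negative.
-/

open Matrix

variable {ι R : Type*}

section PiKronecker

variable [Fintype ι] {m n : ι → Type*}

/-- The Kronecker product of a finite family of matrices: the single matrix whose bilinear form is
the tensor sandwich contraction. Its rows and columns are indexed by dependent functions, so that no
order on the factors has to be chosen. -/
def piKronecker [CommMonoid R] (X : ∀ i, Matrix (m i) (n i) R) : Matrix (∀ i, m i) (∀ i, n i) R :=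
  of fun g f ↦ ∏ i, X i (g i) (f i)

theorem piKronecker_apply [CommMonoid R] (X : ∀ i, Matrix (m i) (n i) R) (g : ∀ i, m i)
    (f : ∀ i, n i) : piKronecker X g f = ∏ i, X i (g i) (f i) :=
  rfl

theorem transpose_piKronecker [CommMonoid R] (X : ∀ i, Matrix (m i) (n i) R) :
    (piKronecker X)ᵀ = piKronecker fun i ↦ (X i)ᵀ :=
  rfl

theorem piKronecker_neg [CommRing R] (X : ∀ i, Matrix (m i) (n i) R) :
    piKronecker (fun i ↦ -X i) = (-1 : R) ^ Fintype.card ι • piKronecker X := by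
  ext g f
  simp only [piKronecker_apply, Matrix.neg_apply, Matrix.smul_apply, Finset.prod_neg,
    Finset.card_univ, smul_eq_mul]

theorem transpose_piKronecker_eq_neg_of_odd_card [CommRing R]
    (hι : Odd (Fintype.card ι)) {X : ∀ i, Matrix (n i) (n i) R} (hX : ∀ i, (X i)ᵀ = -X i) :
    (piKronecker X)ᵀ = -piKronecker X := by
  simp only [transpose_piKronecker, hX, piKronecker_neg, hι.neg_one_pow, neg_one_smul]

end PiKronecker

theorem dotProduct_mulVec_self_eq_zero_of_transpose_eq_neg [CommRing R] [Fintype ι]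
    (two_regular : IsLeftRegular (2 : R)) {A : Matrix ι ι R} (hA : Aᵀ = -A) (v : ι → R) :
    v ⬝ᵥ A *ᵥ v = 0 := by
  have eq_neg_self : v ⬝ᵥ A *ᵥ v = -(v ⬝ᵥ A *ᵥ v) :=
    calc v ⬝ᵥ A *ᵥ v = v ⬝ᵥ Aᵀ *ᵥ v := (dotProduct_transpose_mulVec A v v).symm
      _ = -(v ⬝ᵥ A *ᵥ v) := by rw [hA, neg_mulVec, dotProduct_neg]
  rw [← two_regular.mul_left_eq_zero_iff, two_mul]
  exact eq_neg_iff_add_eq_zero.mp eq_neg_self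

theorem sum_sum_prod_mul_mul_eq_dotProduct_piKronecker [CommSemiring R]
    [Fintype ι] [DecidableEq ι] {m n : ι → Type*} [∀ i, Fintype (m i)] [∀ i, Fintype (n i)]
    (X : ∀ i, Matrix (m i) (n i) R) (φ : (∀ i, n i) → R) (ψ : (∀ i, m i) → R) :
    ∑ f, ∑ g, (∏ i, X i (g i) (f i)) * φ f * ψ g = ψ ⬝ᵥ piKronecker X *ᵥ φ := by
  rw [Finset.sum_comm]
  simp only [dotProduct, mulVec, piKronecker_apply, mul_comm (ψ _), Finset.sum_mul]

theorem odd_spinor_degree_two_contraction_vanishes_general [CommRing R]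
    [Fintype ι] [DecidableEq ι] {n : ι → Type*} [∀ i, Fintype (n i)]
    (two_regular : IsLeftRegular (2 : R)) (hι : Odd (Fintype.card ι))
    (X : ∀ i, Matrix (n i) (n i) R) (hX : ∀ i, (X i)ᵀ = -X i) (ψ : (∀ i, n i) → R) :
    ∑ f, ∑ g, (∏ i, X i (g i) (f i)) * ψ f * ψ g = 0 := by
  rw [sum_sum_prod_mul_mul_eq_dotProduct_piKronecker]
  exact dotProduct_mulVec_self_eq_zero_of_transpose_eq_neg two_regular
    (transpose_piKronecker_eq_neg_of_odd_card hι hX) ψ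

/-- Every degree-2 tensor sandwich contraction built from antisymmetric matrices vanishes
identically for an odd number of Dirac spinors. -/
theorem odd_spinor_degree_two_contraction_vanishes
    (N : ℕ) (hN : Odd N)
    (X : Fin N → Matrix (Fin 4) (Fin 4) ℂ)
    (hX : ∀ i : Fin N, (X i).transpose = -(X i))
    (ψ : (Fin N → Fin 4) → ℂ) :
    ∑ f : Fin N → Fin 4, ∑ g : Fin N → Fin 4,
      (∏ i : Fin N, X i (g i) (f i)) * ψ f * ψ g = 0 :=
  odd_spinor_degree_two_contraction_vanishes_general (IsRegular.of_ne_zero two_ne_zero).left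
    (by rwa [Fintype.card_fin]) X hX ψ
end
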